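/- Fix n, m, k ∈ ℕ with n ≥ 1 and a constant Γ > 1. Then there exist constants 0 < c ≤ C, depending only on n, k, m and Γ, with the following property: for every nondegenerate n-simplex T ⊂ ℝⁿ (the convex hull of n+1 affinely independent points) satisfying the shape-regularity condition diam(T) ≤ Γ · R_{i,T}, where R_{i,T} is the radius of the largest ball contained in T, and for all polynomials a₁, …, a_m on ℝⁿ of total degree at most k, one has c · ∏_{j=1}^m max_{T} |a_j| ≤ ⨍_T |∏_{j=1}^m a_j| dx ≤ C · ∏_{j=1}^m max_{T} |a_j|. -/

import Mathlib

open MeasureTheory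
noncomputable section
def QP (n k : ℕ) (c : (Fin n → Fin (k+1)) → ℝ) : MvPolynomial (Fin n) ℝ :=
  ∑ α, MvPolynomial.monomial (Finsupp.equivFunOnFinite.symm (fun i => (α i : ℕ))) (c α)

lemma QP_coeff (n k : ℕ) (c : (Fin n → Fin (k+1)) → ℝ) (β : Fin n → Fin (k+1)) :
    (QP n k c).coeff (Finsupp.equivFunOnFinite.symm (fun i => (β i : ℕ))) = c β := by
  classical
  unfold QP
  rw [MvPolynomial.coeff_sum, Finset.sum_eq_single β]
  · simp
  · intro α _ h
    rw [MvPolynomial.coeff_monomial, if_neg]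
    intro h2
    apply h
    funext i
    have := DFunLike.congr_fun h2 i
    simpa [Fin.ext_iff] using this
  · simp

lemma QP_eval (n k : ℕ) (c : (Fin n → Fin (k+1)) → ℝ) (x : Fin n → ℝ) :
    MvPolynomial.eval x (QP n k c) = ∑ α, c α * ∏ i, x i ^ (α i : ℕ) := by
  unfold QP
  simp [MvPolynomial.eval_monomial, Finsupp.prod_fintype]

lemma QP_surj (n k : ℕ) (a : MvPolynomial (Fin n) ℝ) (h : a.totalDegree ≤ k) :
    ∃ c, QP n k c = a := by
  classical
  refine ⟨fun α => a.coeff (Finsupp.equivFunOnFinite.symm (fun i => (α i : ℕ))), ?_⟩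
  ext d
  by_cases hd : ∀ i, d i < k + 1
  · have : d = (Finsupp.equivFunOnFinite.symm (fun i => ((⟨d i, hd i⟩ : Fin (k+1)) : ℕ))) := by
      ext i; simp
    rw [this, QP_coeff n k _ (fun i => ⟨d i, hd i⟩)]
  · push Not at hd
    obtain ⟨i, hi⟩ := hd
    have h1 : a.coeff d = 0 := by
      by_contra hne
      have h2 := MvPolynomial.le_totalDegree (MvPolynomial.mem_support_iff.2 hne)
      have h3 : d i ≤ d.sum fun _ e => e := by
        rw [Finsupp.sum_fintype _ _ (by simp)]
        exact Finset.single_le_sum (f := fun i => d i) (fun _ _ => Nat.zero_le _) (Finset.mem_univ i)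
      omega
    rw [h1]
    unfold QP
    rw [MvPolynomial.coeff_sum]
    apply Finset.sum_eq_zero
    intro α _
    rw [MvPolynomial.coeff_monomial, if_neg]
    intro h2
    have := DFunLike.congr_fun h2 i
    simp at this
    omega

lemma affine_subst (n k : ℕ) (a : MvPolynomial (Fin n) ℝ) (h : a.totalDegree ≤ k)
    (z : Fin n → ℝ) (r : ℝ) :
    ∃ c, ∀ y : Fin n → ℝ, MvPolynomial.eval y (QP n k c) =
      MvPolynomial.eval (fun i => z i + r * y i) a := by
  classical
  let g : Fin n → MvPolynomial (Fin n) ℝ := fun i => MvPolynomial.C (z i) + MvPolynomial.C r * MvPolynomial.X i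
  have hg : ∀ i, (g i).totalDegree ≤ 1 := by
    intro i
    refine (MvPolynomial.totalDegree_add _ _).trans (max_le (by simp) ?_)
    refine (MvPolynomial.totalDegree_mul _ _).trans (by simp)
  obtain ⟨c, hc⟩ := QP_surj n k (MvPolynomial.bind₁ g a) (by
    rw [MvPolynomial.bind₁, MvPolynomial.aeval_def, MvPolynomial.eval₂_eq']
    refine MvPolynomial.totalDegree_finsetSum_le fun d hd => ?_
    refine (MvPolynomial.totalDegree_mul _ _).trans ?_
    have h0 : (algebraMap ℝ (MvPolynomial (Fin n) ℝ) (a.coeff d)).totalDegree = 0 :=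
      MvPolynomial.totalDegree_C _
    rw [h0, zero_add]
    refine (MvPolynomial.totalDegree_finsetProd _ _).trans ?_
    have h2 := MvPolynomial.le_totalDegree hd
    rw [Finsupp.sum_fintype _ _ (by simp)] at h2
    refine le_trans (Finset.sum_le_sum (g := fun i => d i) fun i _ => ?_) (h2.trans h)
    refine (MvPolynomial.totalDegree_pow _ _).trans ?_
    exact (Nat.mul_le_mul_left _ (hg i)).trans (by simp))
  refine ⟨c, fun y => ?_⟩
  rw [hc]
  rw [MvPolynomial.bind₁, MvPolynomial.aeval_def, MvPolynomial.eval₂_eq', map_sum, MvPolynomial.eval_eq' _ a]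
  refine Finset.sum_congr rfl fun d _ => ?_
  simp [g, MvPolynomial.algebraMap_eq]

abbrev EN (n : ℕ) := EuclideanSpace ℝ (Fin n)

lemma QP_cont (n k : ℕ) : Continuous (fun q : ((Fin n → Fin (k+1)) → ℝ) × EN n =>
    MvPolynomial.eval (fun i => q.2 i) (QP n k q.1)) := by
  simp only [QP_eval]
  fun_prop

lemma ev_cont (n : ℕ) (a : MvPolynomial (Fin n) ℝ) : Continuous (fun x : EN n =>
    MvPolynomial.eval (fun i => x i) a) := by
  simp only [MvPolynomial.eval_eq']
  fun_prop

lemma poly_zero (n : ℕ) (a : MvPolynomial (Fin n) ℝ)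
    (h : ∀ x ∈ Metric.ball (0 : EN n) 1, MvPolynomial.eval (fun i => x i) a = 0) : a = 0 := by
  have h1 : ∀ᶠ x : EN n in nhds 0, MvPolynomial.eval (fun i => x i) a = 0 := by
    filter_upwards [Metric.ball_mem_nhds (0 : EN n) one_pos] with x hx using h x hx
  have h2 : ∀ᶠ x : Fin n → ℝ in nhds 0, MvPolynomial.eval x a = 0 := by
    have hc : Continuous (fun x : Fin n → ℝ => (WithLp.toLp 2 x : EN n)) := PiLp.continuous_toLp 2 _
    exact (hc.tendsto' 0 0 (by simp)).eventually h1
  obtain ⟨ε, hε, h3⟩ := Metric.eventually_nhds_iff_ball.1 h2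
  apply MvPolynomial.funext_set (fun _ => Metric.ball (0:ℝ) ε)
  · intro i
    rw [Real.ball_eq_Ioo]
    exact Set.Ioo_infinite (by linarith)
  · intro x hx
    rw [map_zero]
    apply h3
    rw [ball_pi _ hε]
    exact hx

lemma key (n m k : ℕ) : ∃ c0 : ℝ, 0 < c0 ∧ ∀ c : Fin m → ((Fin n → Fin (k+1)) → ℝ),
    c0 * ∏ j, ‖c j‖ ≤ ∫ x in Metric.closedBall (0 : EN n) 1,
      |∏ j, MvPolynomial.eval (fun i => x i) (QP n k (c j))| := by
  let F : (Fin m → ((Fin n → Fin (k+1)) → ℝ)) → ℝ := fun c =>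
    ∫ x in Metric.closedBall (0 : EN n) 1,
      |∏ j, MvPolynomial.eval (fun i => x i) (QP n k (c j))|
  have hF : Continuous F := by
    apply continuous_parametric_integral_of_continuous _ (isCompact_closedBall _ _)
    simp only [Function.uncurry_def, QP_eval]
    fun_prop
  have hcont : ∀ c : Fin m → ((Fin n → Fin (k+1)) → ℝ), Continuous (fun x : EN n =>
      |∏ j, MvPolynomial.eval (fun i => x i) (QP n k (c j))|) := by
    intro c
    exact (continuous_finsetProd _ fun j _ => ev_cont n _).abs
  have hpos : ∀ c, (∀ j, c j ≠ 0) → 0 < F c := by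
    intro c hc
    have hne : ∏ j, QP n k (c j) ≠ 0 := by
      rw [Finset.prod_ne_zero_iff]
      intro j _ h0
      apply hc j
      funext β
      rw [← QP_coeff n k (c j) β, h0]; simp
    have : ∃ x ∈ Metric.ball (0 : EN n) 1, MvPolynomial.eval (fun i => x i) (∏ j, QP n k (c j)) ≠ 0 := by
      by_contra! h
      exact hne (poly_zero n _ h)
    obtain ⟨x, hx, hx2⟩ := this
    rw [map_prod] at hx2
    change 0 < ∫ x in Metric.closedBall (0 : EN n) 1, _
    rw [setIntegral_pos_iff_support_of_nonneg_ae]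
    · have hop : IsOpen (Function.support (fun x : EN n =>
          |∏ j, MvPolynomial.eval (fun i => x i) (QP n k (c j))|) ∩ Metric.ball 0 1) :=
        (hcont c).isOpen_support.inter Metric.isOpen_ball
      refine lt_of_lt_of_le (hop.measure_pos volume ⟨x, ?_, hx⟩) (measure_mono ?_)
      · simpa using hx2
      · exact Set.inter_subset_inter_right _ Metric.ball_subset_closedBall
    · exact Filter.Eventually.of_forall fun x => abs_nonneg _
    · exact (hcont c).continuousOn.integrableOn_compact (isCompact_closedBall _ _)
  let K : Set (Fin m → ((Fin n → Fin (k+1)) → ℝ)) := Set.univ.pi fun _ => Metric.sphere 0 1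
  have hK : IsCompact K := isCompact_univ_pi fun _ => isCompact_sphere _ _
  have hKne : K.Nonempty := by
    refine ⟨fun _ _ => 1, ?_⟩
    intro j _
    simp [pi_norm_const]
  obtain ⟨c1, hc1, hmin⟩ := hK.exists_isMinOn hKne hF.continuousOn
  refine ⟨F c1, hpos c1 ?_, ?_⟩
  · intro j h
    have := hc1 j (Set.mem_univ _)
    simp [h] at this
  · intro c
    by_cases h : ∃ j, c j = 0
    · obtain ⟨j, hj⟩ := h
      rw [Finset.prod_eq_zero (Finset.mem_univ j) (by simp [hj]), mul_zero]
      exact integral_nonneg fun x => abs_nonneg _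
    · push Not at h
      let u : Fin m → ((Fin n → Fin (k+1)) → ℝ) := fun j => ‖c j‖⁻¹ • c j
      have hu : u ∈ K := by
        intro j _
        have := norm_ne_zero_iff.2 (h j)
        simp [u, norm_smul, this]
      have h1 : F c1 ≤ F u := hmin hu
      have h2 : F c = F u * ∏ j, ‖c j‖ := by
        simp only [F]
        rw [← integral_mul_const]
        congr 1
        funext x
        have hev : ∀ j, MvPolynomial.eval (fun i => x i) (QP n k (c j)) =
            MvPolynomial.eval (fun i => x i) (QP n k (u j)) * ‖c j‖ := by
          intro j
          have := norm_ne_zero_iff.2 (h j)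
          rw [QP_eval, QP_eval, Finset.sum_mul]
          apply Finset.sum_congr rfl
          intro α _
          simp only [u, Pi.smul_apply, smul_eq_mul]
          field_simp
        simp only [hev, Finset.prod_mul_distrib, abs_mul]
        congr 1
        exact abs_of_nonneg (Finset.prod_nonneg fun _ _ => norm_nonneg _)
      change _ ≤ F c
      rw [h2]
      exact mul_le_mul_of_nonneg_right h1 (Finset.prod_nonneg fun _ _ => norm_nonneg _)

lemma ub (n k : ℕ) (Γ : ℝ) (hΓ : 1 < Γ) : ∃ M : ℝ, 0 < M ∧ ∀ (c : (Fin n → Fin (k+1)) → ℝ)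
    (y : EN n), ‖y‖ ≤ Γ → |MvPolynomial.eval (fun i => y i) (QP n k c)| ≤ M * ‖c‖ := by
  refine ⟨∑ _α : Fin n → Fin (k+1), ∏ _i : Fin n, Γ ^ k, ?_, ?_⟩
  · exact Finset.sum_pos (fun _ _ => by positivity) Finset.univ_nonempty
  · intro c y hy
    rw [QP_eval, Finset.sum_mul]
    refine (Finset.abs_sum_le_sum_abs _ _).trans (Finset.sum_le_sum fun α _ => ?_)
    rw [abs_mul, mul_comm, Finset.abs_prod]
    refine mul_le_mul (Finset.prod_le_prod (fun _ _ => abs_nonneg _) fun i _ => ?_)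
      (norm_le_pi_norm c α) (abs_nonneg _) (by positivity)
    rw [abs_pow]
    have h1 : |y i| ≤ Γ := (PiLp.norm_apply_le y i).trans hy
    exact (pow_le_pow_left₀ (abs_nonneg _) h1 _).trans (pow_le_pow_right₀ hΓ.le (by omega))

end

/-- Equivalence of the product of sup-norms and the average of the product for
polynomials of bounded degree on shape-regular simplices: for fixed `n ≥ 1`,
degrees `≤ k`, `m` factors and shape-regularity parameter `Γ > 1`, there are
constants `0 < c ≤ C` (depending only on `n, k, m, Γ`) such that for every
nondegenerate `n`-simplex `T ⊆ ℝⁿ` with `diam T ≤ Γ · R_{i,T}` (witnessed by a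
closed ball of radius `r` inside `T` with `diam T ≤ Γ r`) and all polynomials
`a₁, …, a_m` of total degree at most `k`,
`c ∏ⱼ max_T |aⱼ| ≤ ⨍_T |∏ⱼ aⱼ| ≤ C ∏ⱼ max_T |aⱼ|`. -/
theorem polynomial_product_average_on_simplex
    (n m k : ℕ) (Γ : ℝ) (hn : 1 ≤ n) (hΓ : 1 < Γ) :
    ∃ c C : ℝ, 0 < c ∧ c ≤ C ∧
      ∀ (p : Fin (n + 1) → EuclideanSpace ℝ (Fin n)),
        AffineIndependent ℝ p →
        ∀ T : Set (EuclideanSpace ℝ (Fin n)),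
          T = convexHull ℝ (Set.range p) →
          -- shape regularity: `diam T ≤ Γ * r` for a ball of radius `r` inside `T`
          (∃ (z : EuclideanSpace ℝ (Fin n)) (r : ℝ), 0 < r ∧
            Metric.closedBall z r ⊆ T ∧ Metric.diam T ≤ Γ * r) →
          ∀ a : Fin m → MvPolynomial (Fin n) ℝ,
            (∀ j, (a j).totalDegree ≤ k) →
            c * ∏ j, sSup ((fun x => |MvPolynomial.eval (fun i => x i) (a j)|) '' T) ≤
                ⨍ x in T, |∏ j, MvPolynomial.eval (fun i => x i) (a j)| ∧
              ⨍ x in T, |∏ j, MvPolynomial.eval (fun i => x i) (a j)| ≤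
                C * ∏ j, sSup ((fun x => |MvPolynomial.eval (fun i => x i) (a j)|) '' T) := by
  obtain ⟨c0, hc0, hkey⟩ := key n m k
  obtain ⟨M, hM, hub⟩ := ub n k Γ hΓ
  set v := volume.real (Metric.closedBall (0 : EN n) 1) with hv
  have hv0 : 0 < v := by
    rw [hv, Measure.real]
    exact ENNReal.toReal_pos (Metric.measure_closedBall_pos _ _ one_pos).ne' measure_closedBall_lt_top.ne
  have hΓ0 : 0 < Γ := by linarith
  refine ⟨c0 / (M ^ m * (Γ ^ n * v)), max (c0 / (M ^ m * (Γ ^ n * v))) 1, by positivity, le_max_left _ _, ?_⟩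
  rintro p - T hT ⟨z, r, hr, hball, hdiam⟩ a ha
  have hTc : IsCompact T := by
    rw [hT]; exact (Set.finite_range p).isCompact_convexHull (𝕜 := ℝ)
  have hzT : z ∈ T := hball (Metric.mem_closedBall_self hr.le)
  have hTsub : T ⊆ Metric.closedBall z (Γ * r) := fun x hx =>
    (Metric.dist_le_diam_of_mem hTc.isBounded hx hzT).trans hdiam
  have hcont : Continuous (fun x : EN n => |∏ j, MvPolynomial.eval (fun i => x i) (a j)|) :=
    (continuous_finsetProd _ fun j _ => ev_cont n _).abs
  have hint : IntegrableOn (fun x : EN n => |∏ j, MvPolynomial.eval (fun i => x i) (a j)|) T :=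
    hcont.continuousOn.integrableOn_compact hTc
  have hbdd : ∀ j, BddAbove ((fun x : EN n => |MvPolynomial.eval (fun i => x i) (a j)|) '' T) := fun j =>
    hTc.bddAbove_image (ev_cont n _).abs.continuousOn
  have hS0 : ∀ j, 0 ≤ sSup ((fun x : EN n => |MvPolynomial.eval (fun i => x i) (a j)|) '' T) := by
    intro j
    apply Real.sSup_nonneg
    rintro _ ⟨x, _, rfl⟩
    exact abs_nonneg _
  have hball_vol : ∀ ρ : ℝ, 0 ≤ ρ → volume.real (Metric.closedBall z ρ) = ρ ^ n * v := by
    intro ρ hρ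
    rw [hv, Measure.addHaar_real_closedBall' _ _ hρ]
    simp
  have hTv : 0 < volume.real T := by
    refine lt_of_lt_of_le ?_ (measureReal_mono hball hTc.measure_lt_top.ne)
    rw [hball_vol r hr.le]; positivity
  have hTv2 : volume.real T ≤ (Γ * r) ^ n * v := by
    rw [← hball_vol _ (by positivity)]
    exact measureReal_mono hTsub measure_closedBall_lt_top.ne
  rw [setAverage_eq, smul_eq_mul]
  constructor
  · choose c hc using fun j => affine_subst n k (a j) (ha j) (fun i => z i) r
    have hS : ∀ j, sSup ((fun x : EN n => |MvPolynomial.eval (fun i => x i) (a j)|) '' T) ≤ M * ‖c j‖ := by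
      intro j
      apply csSup_le ((Set.nonempty_of_mem hzT).image _)
      rintro _ ⟨x, hx, rfl⟩
      have h1 := hub (c j) (r⁻¹ • (x - z)) (by
        rw [norm_smul, norm_inv, Real.norm_of_nonneg hr.le, ← dist_eq_norm, inv_mul_le_iff₀ hr, mul_comm]
        exact hTsub hx)
      rw [hc] at h1
      have hfun : (fun i => z i + r * (r⁻¹ • (x - z)) i) = fun i => x i := by
        funext i
        simp only [PiLp.smul_apply, PiLp.sub_apply, smul_eq_mul]
        field_simp
        ring
      rw [hfun] at h1
      exact h1
    have hprod : ∏ j, sSup ((fun x : EN n => |MvPolynomial.eval (fun i => x i) (a j)|) '' T) ≤ M ^ m * ∏ j, ‖c j‖ := by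
      refine (Finset.prod_le_prod (fun j _ => hS0 j) fun j _ => hS j).trans ?_
      rw [Finset.prod_mul_distrib]; simp
    have hI : r ^ n * ∫ y in Metric.closedBall (0 : EN n) 1, |∏ j, MvPolynomial.eval (fun i => y i) (QP n k (c j))|
        = ∫ x in Metric.closedBall z r, |∏ j, MvPolynomial.eval (fun i => x i) (a j)| := by
      have e1 := Measure.setIntegral_comp_smul_of_pos (volume : Measure (EN n))
        (fun w : EN n => |∏ j, MvPolynomial.eval (fun i => (z + w) i) (a j)|)
        (Metric.closedBall 0 1) hr
      have e2 : ∫ y in Metric.closedBall (0 : EN n) 1, |∏ j, MvPolynomial.eval (fun i => y i) (QP n k (c j))| = ∫ y in Metric.closedBall (0 : EN n) 1, |∏ j, MvPolynomial.eval (fun i => (z + r • y) i) (a j)| := by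
        simp [hc]
      rw [e2, e1, smul_closedBall _ _ zero_le_one]
      simp only [finrank_euclideanSpace, Fintype.card_fin, smul_eq_mul, smul_zero, mul_one, Real.norm_of_nonneg hr.le]
      rw [mul_inv_cancel_left₀ (by positivity)]
      have e3 := (measurePreserving_add_left (volume : Measure (EN n)) z).setIntegral_preimage_emb
        (measurableEmbedding_addLeft z)
        (fun x : EN n => |∏ j, MvPolynomial.eval (fun i => x i) (a j)|) (Metric.closedBall z r)
      rw [← e3]
      simp
    have hmono : ∫ x in Metric.closedBall z r, |∏ j, MvPolynomial.eval (fun i => x i) (a j)| ≤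
        ∫ x in T, |∏ j, MvPolynomial.eval (fun i => x i) (a j)| :=
      setIntegral_mono_set hint (Filter.Eventually.of_forall fun x => abs_nonneg _)
        (Filter.Eventually.of_forall hball)
    have hk := hkey c
    have hP : 0 ≤ ∏ j, ‖c j‖ := Finset.prod_nonneg fun _ _ => norm_nonneg _
    have hlow : r ^ n * (c0 * ∏ j, ‖c j‖) ≤ ∫ x in T, |∏ j, MvPolynomial.eval (fun i => x i) (a j)| := by
      refine le_trans ?_ hmono
      rw [← hI]
      gcongr
    calc _ ≤ c0 / (M ^ m * (Γ ^ n * v)) * (M ^ m * ∏ j, ‖c j‖) := by gcongr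
      _ = ((Γ * r) ^ n * v)⁻¹ * (r ^ n * (c0 * ∏ j, ‖c j‖)) := by
        rw [mul_pow]; field_simp
      _ ≤ (volume.real T)⁻¹ * (r ^ n * (c0 * ∏ j, ‖c j‖)) := by gcongr
      _ ≤ _ := by gcongr
  · have hle : ∫ x in T, |∏ j, MvPolynomial.eval (fun i => x i) (a j)| ≤
        volume.real T * ∏ j, sSup ((fun x : EN n => |MvPolynomial.eval (fun i => x i) (a j)|) '' T) := by
      rw [← smul_eq_mul, ← setIntegral_const]
      refine setIntegral_mono_on hint (integrableOn_const hTc.measure_lt_top.ne) hTc.measurableSet fun x hx => ?_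
      rw [Finset.abs_prod]
      exact Finset.prod_le_prod (fun _ _ => abs_nonneg _) fun j _ => le_csSup (hbdd j) ⟨x, hx, rfl⟩
    rw [inv_mul_le_iff₀ hTv]
    refine hle.trans ?_
    have hP : 0 ≤ ∏ j, sSup ((fun x : EN n => |MvPolynomial.eval (fun i => x i) (a j)|) '' T) :=
      Finset.prod_nonneg fun j _ => hS0 j
    gcongr
    exact le_mul_of_one_le_left hP (le_max_right _ _)
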